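/- arXiv:1812.10955 — 4 statements merged into one kernel-verified Lean document; each statement's English description precedes it below -/
import Mathlib

section
/- Let q > 1 be a real number and let α, β be real numbers with 0 < β < α. Let a, b : ℕ → ℕ be functions with a(n)/n → α and b(n)/n → β as n → ∞, and with b(n) ≤ a(n) for all sufficiently large n. Then (1/n)·log_q C(a(n), b(n)) converges to α·log_q α − β·log_q β − (α−β)·log_q(α−β) as n → ∞. -/
/-!
Stirling's formula gives `log m! = m log m - m + o(m)`. If `c n / n → γ > 0`, substituting `m = c n`
yields `log (c n)! = c n * log n + n * (γ log γ - γ) + o(n)`. Write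
`log C(a, b) = log a! - log b! - log (a - b)!` and apply this to `a`, `b` and `a - b`, which have
limiting densities `α`, `β` and `α - β`: the `log n` terms cancel exactly since
`a = b + (a - b)`, the linear terms cancel since `α = β + (α - β)`, and what is left is the claimed
exponent (in natural logarithms; divide by `log q`).
-/

open Filter Real

/-- Weak form of Stirling's formula: `log m! = m log m - m + o(m)`. -/
lemma tendsto_log_factorial_div :
    Tendsto (fun m : ℕ => Real.log (m.factorial) / m - Real.log m) atTop (nhds (-1)) := by
  have hcast : Tendsto (fun m : ℕ => (m : ℝ)) atTop atTop := tendsto_natCast_atTop_atTop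
  have h1 : Tendsto (fun m : ℕ => Real.log (Stirling.stirlingSeq m) / m) atTop (nhds 0) :=
    (Stirling.tendsto_stirlingSeq_sqrt_pi.log (by positivity)).div_atTop hcast
  have h2 : Tendsto (fun m : ℕ => Real.log m / m) atTop (nhds 0) := by
    have h := Real.isLittleO_log_id_atTop.tendsto_div_nhds_zero.comp hcast
    exact h
  have h3 : Tendsto (fun m : ℕ => Real.log 2 / (m : ℝ)) atTop (nhds 0) :=
    tendsto_const_nhds.div_atTop hcast
  have h := ((h1.add ((h3.add h2).const_mul (1 / 2))).sub_const 1)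
  norm_num at h
  refine h.congr' ?_
  filter_upwards [eventually_ge_atTop 1] with m hm
  have hm0 : (m : ℝ) ≠ 0 := by positivity
  rw [Stirling.log_stirlingSeq_formula, Real.log_mul two_ne_zero hm0,
    Real.log_div hm0 (Real.exp_ne_zero 1), Real.log_exp]
  field_simp
  ring

/-- For a sequence of density `γ > 0`, `log (c n)! = c n * log n + n * (γ log γ - γ) + o(n)`. -/
lemma tendsto_log_factorial_of_density (γ : ℝ) (hγ : 0 < γ) (c : ℕ → ℕ)
    (hc : Tendsto (fun n => (c n : ℝ) / n) atTop (nhds γ)) :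
    Tendsto (fun n : ℕ => Real.log ((c n).factorial) / n - (c n : ℝ) / n * Real.log n) atTop
      (nhds (γ * Real.log γ - γ)) := by
  have hcast : Tendsto (fun m : ℕ => (m : ℝ)) atTop atTop := tendsto_natCast_atTop_atTop
  have hctop : Tendsto c atTop atTop := by
    rw [← tendsto_natCast_atTop_iff (R := ℝ)]
    refine (hc.pos_mul_atTop hγ hcast).congr' ?_
    filter_upwards [eventually_ge_atTop 1] with n hn
    have hn0 : (n : ℝ) ≠ 0 := by positivity
    field_simp
  have h := hc.mul ((hc.log hγ.ne').add (tendsto_log_factorial_div.comp hctop))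
  rw [show γ * (Real.log γ + -1) = γ * Real.log γ - γ by ring] at h
  refine h.congr' ?_
  filter_upwards [eventually_ge_atTop 1, hctop.eventually_ge_atTop 1] with n hn hcn
  have hn0 : (n : ℝ) ≠ 0 := by positivity
  have hc0 : (c n : ℝ) ≠ 0 := by positivity
  simp only [Function.comp_apply]
  rw [Real.log_div hc0 hn0]
  field_simp
  ring

/-- Asymptotics of binomial coefficients: if `a(n)/n → α` and
`b(n)/n → β` with `0 < β < α`, then
`(1/n) log_q C(a(n), b(n)) → α log_q α − β log_q β − (α−β) log_q (α−β)`. -/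
theorem binomial_asymptotic_exponent
    (q α β : ℝ) (hq : 1 < q) (hβ : 0 < β) (hβα : β < α)
    (a b : ℕ → ℕ)
    (ha : Tendsto (fun n => (a n : ℝ) / n) atTop (nhds α))
    (hb : Tendsto (fun n => (b n : ℝ) / n) atTop (nhds β))
    (hba : ∀ᶠ n in atTop, b n ≤ a n) :
    Tendsto (fun n : ℕ => (1 / (n : ℝ)) * Real.logb q (Nat.choose (a n) (b n)))
      atTop (nhds (α * Real.logb q α - β * Real.logb q β
        - (α - β) * Real.logb q (α - β))) := by
  have hd : Tendsto (fun n => ((a n - b n : ℕ) : ℝ) / n) atTop (nhds (α - β)) := by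
    refine (ha.sub hb).congr' ?_
    filter_upwards [hba] with n hn
    rw [Nat.cast_sub hn, sub_div]
  have h := (((tendsto_log_factorial_of_density α (hβ.trans hβα) a ha).sub
    (tendsto_log_factorial_of_density β hβ b hb)).sub
    (tendsto_log_factorial_of_density (α - β) (sub_pos.2 hβα) (fun n => a n - b n) hd)).div_const
    (Real.log q)
  have hlim : (α * Real.log α - α - (β * Real.log β - β)
      - ((α - β) * Real.log (α - β) - (α - β))) / Real.log q
      = α * Real.logb q α - β * Real.logb q β - (α - β) * Real.logb q (α - β) := by
    simp only [Real.logb]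
    ring
  rw [hlim] at h
  refine h.congr' ?_
  filter_upwards [hba] with n hn
  have hf : ∀ m : ℕ, (m.factorial : ℝ) ≠ 0 := fun m => by positivity
  rw [Nat.cast_choose ℝ hn, Real.logb, Real.log_div (hf _) (mul_ne_zero (hf _) (hf _)),
    Real.log_mul (hf _) (hf _), Nat.cast_sub hn]
  ring
end

section
/- Let q > 1 be a real number and let L, Q be real numbers with 0 < Q < L. Let ℓ, m : ℕ → ℕ satisfy ℓ(n)/n → L, m(n)/n → Q, and m(n) ≤ ℓ(n) for all sufficiently large n. Then (1/n)·log_q C(ℓ(n), m(n)) converges to L·log_q L − Q·log_q Q − (L−Q)·log_q(L−Q) as n → ∞. -/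
/-!
Taking logarithms in Stirling's formula, `log k! = k log k - k + O(log k)`. If `k(n)/n → K > 0`,
this says that `(log k(n)! - k(n) log n + k(n)) / n → K log K`. The correction `-k log n + k` is
linear in `k`, so it cancels in `log C(ℓ, m) = log ℓ! - log m! - log (ℓ - m)!`, and applying the
asymptotics to `ℓ`, `m` and `ℓ - m` gives the exponent; dividing by `log q` changes the base.
-/

open Filter Real

/-- The logarithmic form of Stirling's formula on the linear scale `k n ~ K n`. -/
lemma tendsto_log_factorial_linear (K : ℝ) (hK : 0 < K) (k : ℕ → ℕ)
    (hk : Tendsto (fun n => (k n : ℝ) / n) atTop (nhds K)) :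
    Tendsto (fun n : ℕ => (Real.log (k n).factorial - k n * Real.log n + k n) / n)
      atTop (nhds (K * Real.log K)) := by
  have hn : Tendsto (fun n : ℕ => (n : ℝ)) atTop atTop := tendsto_natCast_atTop_atTop
  have hkR : Tendsto (fun n => (k n : ℝ)) atTop atTop := by
    refine (hk.pos_mul_atTop hK hn).congr' ?_
    filter_upwards [eventually_gt_atTop 0] with n h
    have : (n : ℝ) ≠ 0 := by positivity
    field_simp
  have hkN : Tendsto k atTop atTop := tendsto_natCast_atTop_iff.mp hkR
  have h1 : Tendsto (fun n : ℕ => Real.log (Stirling.stirlingSeq (k n)) / n) atTop (nhds 0) := by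
    have h := (Stirling.tendsto_stirlingSeq_sqrt_pi.comp hkN).log
      (Real.sqrt_pos.mpr Real.pi_pos).ne'
    exact h.div_atTop hn
  have h2 : Tendsto (fun n : ℕ => Real.log (2 * k n) / (2 * k n) * ((k n : ℝ) / n))
      atTop (nhds 0) := by
    have h : Tendsto (fun x : ℝ => Real.log x / x) atTop (nhds 0) :=
      Real.isLittleO_log_id_atTop.tendsto_div_nhds_zero
    have h' := (h.comp (hkR.const_mul_atTop (two_pos))).mul hk
    rw [zero_mul] at h'
    exact h'
  have h3 := hk.mul (hk.log hK.ne')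
  have h := (h1.add h2).add h3
  rw [zero_add, zero_add] at h
  refine h.congr' ?_
  filter_upwards [eventually_gt_atTop 0, hkN.eventually_gt_atTop 0] with n hn0 hk0
  have a : (n : ℝ) ≠ 0 := by positivity
  have b : (k n : ℝ) ≠ 0 := by positivity
  rw [Stirling.log_stirlingSeq_formula, Real.log_div b a, Real.log_div b (Real.exp_ne_zero 1),
    Real.log_exp]
  field_simp
  ring

/-- If `ℓ(n)/n → L` and `m(n)/n → Q` with `0 < Q < L`, then
`(1/n) log_q C(ℓ(n), m(n)) → L log_q L − Q log_q Q − (L−Q) log_q (L−Q)`. -/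
theorem binomial_l_q_asymptotic_exponent
    (q L Q : ℝ) (hq : 1 < q) (hQ : 0 < Q) (hQL : Q < L)
    (l m : ℕ → ℕ)
    (hl : Tendsto (fun n => (l n : ℝ) / n) atTop (nhds L))
    (hm : Tendsto (fun n => (m n : ℝ) / n) atTop (nhds Q))
    (hml : ∀ᶠ n in atTop, m n ≤ l n) :
    Tendsto (fun n : ℕ => (1 / (n : ℝ)) * Real.logb q (Nat.choose (l n) (m n)))
      atTop (nhds (L * Real.logb q L - Q * Real.logb q Q
        - (L - Q) * Real.logb q (L - Q))) := by
  have hd : Tendsto (fun n => ((l n - m n : ℕ) : ℝ) / n) atTop (nhds (L - Q)) := by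
    refine (hl.sub hm).congr' ?_
    filter_upwards [hml] with n h
    rw [Nat.cast_sub h, sub_div]
  have h := (((tendsto_log_factorial_linear L (hQ.trans hQL) l hl).sub
    (tendsto_log_factorial_linear Q hQ m hm)).sub
    (tendsto_log_factorial_linear (L - Q) (sub_pos.mpr hQL) _ hd)).div_const (Real.log q)
  have e : L * Real.logb q L - Q * Real.logb q Q - (L - Q) * Real.logb q (L - Q)
      = (L * Real.log L - Q * Real.log Q - (L - Q) * Real.log (L - Q)) / Real.log q := by
    simp only [Real.logb]
    ring
  rw [e]
  refine h.congr' ?_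
  filter_upwards [hml] with n h
  have hf (j : ℕ) : (j.factorial : ℝ) ≠ 0 := by positivity
  rw [Nat.cast_choose ℝ h, Real.logb, Real.log_div (hf _) (mul_ne_zero (hf _) (hf _)),
    Real.log_mul (hf _) (hf _), Nat.cast_sub h]
  ring
end

section
/- Let q > 1 be a real number and let R, L, T, P, Q be real numbers with 0 < P < R/2, 0 < Q < L, 0 < T < 1, and 0 < T − 2P − 2Q < 1 − R − 2L. Let k1, k2, ℓ1, ℓ2, t, p1, p2, q1, q2 : ℕ → ℕ satisfy k1(n)/n → R/2, k2(n)/n → R/2, ℓ1(n)/n → L, ℓ2(n)/n → L, t(n)/n → T, p1(n)/n → P, p2(n)/n → P, q1(n)/n → Q, q2(n)/n → Q, with all binomial coefficients below well-defined (p_i(n) ≤ k_i(n), q_i(n) ≤ ℓ_i(n), t(n) ≤ n, and t(n)−p1(n)−p2(n)−q1(n)−q2(n) ≤ n−k1(n)−k2(n)−ℓ1(n)−ℓ2(n)) for all sufficiently large n. Then (1/n)·log_q [ C(n,t(n))^{−1} · C(n−k1(n)−k2(n)−ℓ1(n)−ℓ2(n), t(n)−p1(n)−p2(n)−q1(n)−q2(n))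 · C(k1(n),p1(n)) · C(k2(n),p2(n)) · C(ℓ1(n),q1(n)) · C(ℓ2(n),q2(n)) ] converges to S(P,Q,L) := T·log_q T + (1−T)·log_q(1−T) + (1−R−2L)·log_q(1−R−2L) − (T−2P−2Q)·log_q(T−2P−2Q) − (1−R−2L−T+2P+2Q)·log_q(1−R−2L−T+2P+2Q) + R·log_q(R/2) − 2P·log_q P − (R−2P)·log_q(R/2−P) + 2L·log_q L − 2Q·log_q Q − 2(L−Q)·log_q(L−Q). -/
/-!
The proof is Stirling's formula in its weakest form, `log m! = m log m - m + o(m)`. If `a n / n`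
tends to `A > 0`, it gives `log (a n)! / n = (a n / n) log n - a n / n + A log A + o(1)`
(`tendsto_log_factorial_div`). The terms `(a n / n) log n - a n / n` are additive in `a n`, so they
cancel in a binomial coefficient `C(a, b) = a! / (b! (a - b)!)`, whose exponent is therefore
`A log A - B log B - (A - B) log (A - B)` (`tendsto_logb_choose_div`). The claim adds up six
such exponents, that of `C(n, t)` with a minus sign. The strict inequalities between the limits force every truncated subtraction to be
a true subtraction for large `n`.
-/

open Filter Real

/-- Stirling's formula as `log m! = m log m - m + o(m)`. -/
lemma tendsto_log_factorial_error :
    Tendsto (fun m : ℕ => (Real.log (m.factorial : ℝ) - m * Real.log m + m) / m) atTop (nhds 0) := by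
  have hlog : Tendsto (fun m : ℕ => Real.log (Stirling.stirlingSeq m)) atTop
      (nhds (Real.log (√π))) :=
    Stirling.tendsto_stirlingSeq_sqrt_pi.log (by positivity)
  have h1 : Tendsto (fun m : ℕ => Real.log (Stirling.stirlingSeq m) / m) atTop (nhds 0) :=
    hlog.div_atTop tendsto_natCast_atTop_atTop
  have h2 : Tendsto (fun m : ℕ => Real.log (m : ℝ) / m) atTop (nhds 0) := by
    have := Real.isLittleO_log_id_atTop.tendsto_div_nhds_zero
    exact this.comp tendsto_natCast_atTop_atTop
  have h3 : Tendsto (fun m : ℕ => Real.log 2 / (m : ℝ)) atTop (nhds 0) :=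
    tendsto_const_nhds.div_atTop tendsto_natCast_atTop_atTop
  have h := h1.add ((h2.add h3).const_mul (1 / 2))
  simp only [add_zero, mul_zero] at h
  refine h.congr' ?_
  filter_upwards [eventually_gt_atTop 0] with m hm
  have hm' : (0 : ℝ) < m := by exact_mod_cast hm
  rw [Stirling.log_stirlingSeq_formula, Real.log_mul (by norm_num) hm'.ne',
    Real.log_div hm'.ne' (Real.exp_ne_zero 1), Real.log_exp]
  field_simp
  ring

/-- A sequence of naturals with positive linear growth rate tends to infinity. -/
lemma tendsto_atTop_of_div {a : ℕ → ℕ} {A : ℝ} (hA : 0 < A)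
    (ha : Tendsto (fun n => (a n : ℝ) / n) atTop (nhds A)) : Tendsto a atTop atTop := by
  rw [← tendsto_natCast_atTop_iff (R := ℝ)]
  refine (ha.pos_mul_atTop hA tendsto_natCast_atTop_atTop).congr' ?_
  filter_upwards [eventually_gt_atTop 0] with n hn
  have : (n : ℝ) ≠ 0 := by positivity
  field_simp

/-- The subtracted term `(a n / n) log n - a n / n` is additive in `a n`, so it drops out of
ratios of factorials such as binomial coefficients. -/
lemma tendsto_log_factorial_div_s13 {a : ℕ → ℕ} {A : ℝ} (hA : 0 < A)
    (ha : Tendsto (fun n => (a n : ℝ) / n) atTop (nhds A)) :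
    Tendsto (fun n : ℕ => Real.log ((a n).factorial : ℝ) / n
        - ((a n : ℝ) / n * Real.log n - (a n : ℝ) / n))
      atTop (nhds (A * Real.log A)) := by
  have hinf := tendsto_atTop_of_div hA ha
  have h := (ha.mul (tendsto_log_factorial_error.comp hinf)).add (ha.mul (ha.log hA.ne'))
  rw [mul_zero, zero_add] at h
  refine h.congr' ?_
  filter_upwards [eventually_gt_atTop 0, hinf.eventually_gt_atTop 0] with n hn han
  have hn' : (n : ℝ) ≠ 0 := by positivity
  have han' : (a n : ℝ) ≠ 0 := by positivity
  simp only [Function.comp_apply]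
  rw [Real.log_div han' hn']
  field_simp
  ring

/-- Differences pass to the limit of the rates: if the limit is positive, the truncated
subtraction is eventually a true one. -/
lemma tendsto_natSub_div {a b : ℕ → ℕ} {A B : ℝ} (hBA : B < A)
    (ha : Tendsto (fun n => (a n : ℝ) / n) atTop (nhds A))
    (hb : Tendsto (fun n => (b n : ℝ) / n) atTop (nhds B)) :
    Tendsto (fun n => ((a n - b n : ℕ) : ℝ) / n) atTop (nhds (A - B)) := by
  refine (ha.sub hb).congr' ?_
  filter_upwards [hb.eventually_lt ha hBA, eventually_gt_atTop 0] with n hn hn0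
  have hn0' : (0 : ℝ) < n := by exact_mod_cast hn0
  have hle : b n ≤ a n := by
    exact_mod_cast ((div_lt_div_iff_of_pos_right hn0').1 hn).le
  rw [Nat.cast_sub hle, sub_div]

/-- The exponential growth rate of a binomial coefficient. -/
lemma tendsto_logb_choose_div (q : ℝ) {a b : ℕ → ℕ} {A B : ℝ} (hB : 0 < B) (hBA : B < A)
    (ha : Tendsto (fun n => (a n : ℝ) / n) atTop (nhds A))
    (hb : Tendsto (fun n => (b n : ℝ) / n) atTop (nhds B))
    (hle : ∀ᶠ n in atTop, b n ≤ a n) :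
    Tendsto (fun n : ℕ => Real.logb q ((a n).choose (b n) : ℝ) / n) atTop
      (nhds (A * Real.logb q A - B * Real.logb q B - (A - B) * Real.logb q (A - B))) := by
  have h := (((tendsto_log_factorial_div_s13 (hB.trans hBA) ha).sub
    (tendsto_log_factorial_div_s13 hB hb)).sub
    (tendsto_log_factorial_div_s13 (sub_pos.2 hBA) (tendsto_natSub_div hBA ha hb))).div_const
      (Real.log q)
  have hlim : A * Real.logb q A - B * Real.logb q B - (A - B) * Real.logb q (A - B)
      = (A * Real.log A - B * Real.log B - (A - B) * Real.log (A - B)) / Real.log q := by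
    simp only [Real.logb]
    ring
  rw [hlim]
  refine h.congr' ?_
  filter_upwards [hle] with n hn
  have hfac : ∀ m : ℕ, (m.factorial : ℝ) ≠ 0 := fun m => by positivity
  rw [Nat.cast_choose ℝ hn, Real.logb, Real.log_div (hfac _) (mul_ne_zero (hfac _) (hfac _)),
    Real.log_mul (hfac _) (hfac _), Nat.cast_sub hn]
  ring

/-- The asymptotic exponent `S(P,Q,L)` of the success probability of one
iteration of the ball-collision algorithm over `F_q`. -/
theorem ball_collision_success_probability_exponent
    (q R L T P Q : ℝ) (hq : 1 < q)
    (hP0 : 0 < P) (hPR : P < R / 2)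
    (hQ0 : 0 < Q) (hQL : Q < L)
    (hT0 : 0 < T) (hT1 : T < 1)
    (h0 : 0 < T - 2 * P - 2 * Q) (h1 : T - 2 * P - 2 * Q < 1 - R - 2 * L)
    (k1 k2 l1 l2 t p1 p2 q1 q2 : ℕ → ℕ)
    (hk1 : Tendsto (fun n => (k1 n : ℝ) / n) atTop (nhds (R / 2)))
    (hk2 : Tendsto (fun n => (k2 n : ℝ) / n) atTop (nhds (R / 2)))
    (hl1 : Tendsto (fun n => (l1 n : ℝ) / n) atTop (nhds L))
    (hl2 : Tendsto (fun n => (l2 n : ℝ) / n) atTop (nhds L))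
    (ht : Tendsto (fun n => (t n : ℝ) / n) atTop (nhds T))
    (hp1 : Tendsto (fun n => (p1 n : ℝ) / n) atTop (nhds P))
    (hp2 : Tendsto (fun n => (p2 n : ℝ) / n) atTop (nhds P))
    (hq1 : Tendsto (fun n => (q1 n : ℝ) / n) atTop (nhds Q))
    (hq2 : Tendsto (fun n => (q2 n : ℝ) / n) atTop (nhds Q))
    (hwd : ∀ᶠ n in atTop,
      p1 n ≤ k1 n ∧ p2 n ≤ k2 n ∧ q1 n ≤ l1 n ∧ q2 n ≤ l2 n ∧ t n ≤ n
      ∧ t n - p1 n - p2 n - q1 n - q2 n ≤ n - k1 n - k2 n - l1 n - l2 n) :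
    Tendsto (fun n : ℕ => (1 / (n : ℝ)) *
        Real.logb q
          (((Nat.choose n (t n) : ℝ))⁻¹
            * (Nat.choose (n - k1 n - k2 n - l1 n - l2 n)
                (t n - p1 n - p2 n - q1 n - q2 n) : ℝ)
            * (Nat.choose (k1 n) (p1 n) : ℝ) * (Nat.choose (k2 n) (p2 n) : ℝ)
            * (Nat.choose (l1 n) (q1 n) : ℝ) * (Nat.choose (l2 n) (q2 n) : ℝ)))
      atTop
      (nhds (T * Real.logb q T + (1 - T) * Real.logb q (1 - T)
        + (1 - R - 2 * L) * Real.logb q (1 - R - 2 * L)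
        - (T - 2 * P - 2 * Q) * Real.logb q (T - 2 * P - 2 * Q)
        - (1 - R - 2 * L - T + 2 * P + 2 * Q)
          * Real.logb q (1 - R - 2 * L - T + 2 * P + 2 * Q)
        + R * Real.logb q (R / 2) - 2 * P * Real.logb q P
        - (R - 2 * P) * Real.logb q (R / 2 - P)
        + 2 * L * Real.logb q L - 2 * Q * Real.logb q Q
        - 2 * (L - Q) * Real.logb q (L - Q))) := by
  have hid : Tendsto (fun n : ℕ => (n : ℝ) / n) atTop (nhds 1) := by
    refine tendsto_const_nhds.congr' ?_
    filter_upwards [eventually_gt_atTop 0] with n hn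
    rw [div_self (by positivity)]
  have hm : Tendsto (fun n : ℕ => ((n - k1 n - k2 n - l1 n - l2 n : ℕ) : ℝ) / n) atTop
      (nhds (1 - R / 2 - R / 2 - L - L)) :=
    tendsto_natSub_div (by linarith) (tendsto_natSub_div (by linarith)
      (tendsto_natSub_div (by linarith) (tendsto_natSub_div (by linarith) hid hk1) hk2) hl1) hl2
  have hs : Tendsto (fun n : ℕ => ((t n - p1 n - p2 n - q1 n - q2 n : ℕ) : ℝ) / n) atTop
      (nhds (T - P - P - Q - Q)) :=
    tendsto_natSub_div (by linarith) (tendsto_natSub_div (by linarith)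
      (tendsto_natSub_div (by linarith) (tendsto_natSub_div (by linarith) ht hp1) hp2) hq1) hq2
  rw [show 1 - R / 2 - R / 2 - L - L = 1 - R - 2 * L by ring] at hm
  rw [show T - P - P - Q - Q = T - 2 * P - 2 * Q by ring] at hs
  have c0 := tendsto_logb_choose_div q hT0 hT1 hid ht (hwd.mono fun n h => h.2.2.2.2.1)
  have c1 := tendsto_logb_choose_div q h0 h1 hm hs (hwd.mono fun n h => h.2.2.2.2.2)
  have c2 := tendsto_logb_choose_div q hP0 hPR hk1 hp1 (hwd.mono fun n h => h.1)
  have c3 := tendsto_logb_choose_div q hP0 hPR hk2 hp2 (hwd.mono fun n h => h.2.1)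
  have c4 := tendsto_logb_choose_div q hQ0 hQL hl1 hq1 (hwd.mono fun n h => h.2.2.1)
  have c5 := tendsto_logb_choose_div q hQ0 hQL hl2 hq2 (hwd.mono fun n h => h.2.2.2.1)
  have h := ((((c0.neg.add c1).add c2).add c3).add c4).add c5
  convert h.congr' ?_ using 2
  · rw [show 1 - R - 2 * L - (T - 2 * P - 2 * Q) = 1 - R - 2 * L - T + 2 * P + 2 * Q by ring,
      Real.logb_one]
    ring
  · filter_upwards [hwd] with n ⟨e2, e3, e4, e5, e0, e1⟩
    have hc : ∀ {a b : ℕ}, b ≤ a → (a.choose b : ℝ) ≠ 0 := fun hab =>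
      Nat.cast_ne_zero.2 (Nat.choose_pos hab).ne'
    have d0 := inv_ne_zero (hc e0)
    have d1 := mul_ne_zero d0 (hc e1)
    have d2 := mul_ne_zero d1 (hc e2)
    have d3 := mul_ne_zero d2 (hc e3)
    have d4 := mul_ne_zero d3 (hc e4)
    rw [Real.logb_mul d4 (hc e5), Real.logb_mul d3 (hc e4), Real.logb_mul d2 (hc e3),
      Real.logb_mul d1 (hc e2), Real.logb_mul d0 (hc e1), Real.logb_inv]
    ring
end

section
/- Let q ≥ 2 be an integer (so that q−1 ≥ 1) and let R, L, P, Q be real numbers with 0 < P < R/2 and 0 < Q < L. Let k1, k2, ℓ1, ℓ2, p1, p2, q1, q2 : ℕ → ℕ satisfy k1(n)/n → R/2, k2(n)/n → R/2, ℓ1(n)/n → L, ℓ2(n)/n → L, p1(n)/n → P, p2(n)/n → P, q1(n)/n → Q, q2(n)/n → Q, with p_i(n) ≤ k_i(n) and q_i(n) ≤ ℓ_i(n) for all sufficiently large n. Then (1/n)·log_q [ C(k1(n),p1(n))·(q−1)^{p1(n)} + C(k2(n),p2(n))·(q−1)^{p2(n)} + C(k1(n),p1(n))·C(ℓ1(n),q1(n))·(q−1)^{p1(n)+q1(n)}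 + C(k2(n),p2(n))·C(ℓ2(n),q2(n))·(q−1)^{p2(n)+q2(n)} + C(k1(n),p1(n))·C(k2(n),p2(n))·C(ℓ1(n),q1(n))·C(ℓ2(n),q2(n))·(q−1)^{p1(n)+p2(n)+q1(n)+q2(n)}·q^{−ℓ1(n)−ℓ2(n)} ] converges to C(P,Q,L) := max{ log_q(q−1)·P + (R/2)·log_q(R/2) − P·log_q P − (R/2−P)·log_q(R/2−P) ; log_q(q−1)·(P+Q) + (R/2)·log_q(R/2) − P·log_q P − (R/2−P)·log_q(R/2−P) + L·log_q L − Q·log_q Q − (L−Q)·log_q(L−Q) ; log_q(q−1)·(2P+2Q) − 2L + R·log_q(R/2) − 2P·log_q P − (R−2P)·log_q(R/2−P) + 2L·log_q L − 2Q·log_q Q − (2L−2Q)·log_q(L−Q) }. -/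
/-!
By Stirling, `log m! = m log m - m + o(m)`. Along a sequence `a n ~ A n` with `A > 0` this gives
`log (a n)! / n = (a n / n) log n + A log A - A + o(1)`. In `log (a choose b)` the divergent
`log n` terms cancel, because `a = b + (a - b)`, and so do the linear terms, which leaves the
exponent `A log A - B log B - (A - B) log (A - B)` (`HasRate.choose`).

Exponential growth rates add under products and combine by `max` under sums,
since `max f g ≤ f + g ≤ 2 max f g` (`HasRate.mul`, `HasRate.add`). The five
summands of the cost have only three rates between them, the two one-sided contributions of each kind
being equal, and the limit is the maximum of these.
-/

open Filter Real

/-- `f` is eventually positive and has exponential growth rate `F` to base `q`, that is,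
`f n = q ^ (F n + o(n))`. Positivity is part of the definition so that `logb` is never
evaluated at its conventional values. -/
def HasRate (q : ℝ) (f : ℕ → ℝ) (F : ℝ) : Prop :=
  (∀ᶠ n in atTop, 0 < f n) ∧ Tendsto (fun n : ℕ => (1 / (n : ℝ)) * logb q (f n)) atTop (nhds F)

theorem HasRate.mul {q : ℝ} {f g : ℕ → ℝ} {F G : ℝ} (hf : HasRate q f F) (hg : HasRate q g G) :
    HasRate q (fun n => f n * g n) (F + G) := by
  refine ⟨?_, (hf.2.add hg.2).congr' ?_⟩
  · filter_upwards [hf.1, hg.1] with n h1 h2 using mul_pos h1 h2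
  · filter_upwards [hf.1, hg.1] with n h1 h2
    rw [logb_mul h1.ne' h2.ne']
    ring

theorem HasRate.inv {q : ℝ} {f : ℕ → ℝ} {F : ℝ} (hf : HasRate q f F) :
    HasRate q (fun n => (f n)⁻¹) (-F) := by
  refine ⟨?_, hf.2.neg.congr fun n => ?_⟩
  · filter_upwards [hf.1] with n h1 using inv_pos.mpr h1
  · rw [logb_inv]
    ring

theorem HasRate.add {q : ℝ} (hq : 1 < q) {f g : ℕ → ℝ} {F G : ℝ}
    (hf : HasRate q f F) (hg : HasRate q g G) :
    HasRate q (fun n => f n + g n) (max F G) := by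
  refine ⟨?_, ?_⟩
  · filter_upwards [hf.1, hg.1] with n h1 h2 using add_pos h1 h2
  · have hlow := hf.2.max hg.2
    have hc : Tendsto (fun n : ℕ => (1 / (n : ℝ)) * logb q 2) atTop (nhds 0) := by
      simpa using tendsto_one_div_atTop_nhds_zero_nat.mul_const (logb q 2)
    have hup := hc.add hlow
    rw [zero_add] at hup
    refine tendsto_of_tendsto_of_tendsto_of_le_of_le' hlow hup ?_ ?_
    · filter_upwards [hf.1, hg.1] with n h1 h2
      have hn : (0 : ℝ) ≤ 1 / n := by positivity
      exact max_le
        (mul_le_mul_of_nonneg_left (logb_le_logb_of_le hq h1 (by linarith)) hn)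
        (mul_le_mul_of_nonneg_left (logb_le_logb_of_le hq h2 (by linarith)) hn)
    · filter_upwards [hf.1, hg.1] with n h1 h2
      have hn : (0 : ℝ) ≤ 1 / n := by positivity
      rcases le_total (f n) (g n) with h | h
      · have : logb q (f n + g n) ≤ logb q 2 + logb q (g n) := by
          rw [← logb_mul two_ne_zero h2.ne']
          exact logb_le_logb_of_le hq (by linarith) (by linarith)
        have := mul_le_mul_of_nonneg_left this hn
        have := le_max_right (1 / (n : ℝ) * logb q (f n)) (1 / (n : ℝ) * logb q (g n))
        linarith
      · have : logb q (f n + g n) ≤ logb q 2 + logb q (f n) := by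
          rw [← logb_mul two_ne_zero h1.ne']
          exact logb_le_logb_of_le hq (by linarith) (by linarith)
        have := mul_le_mul_of_nonneg_left this hn
        have := le_max_left (1 / (n : ℝ) * logb q (f n)) (1 / (n : ℝ) * logb q (g n))
        linarith

theorem HasRate.pow (q : ℝ) {c A : ℝ} (hc : 0 < c) {a : ℕ → ℕ}
    (ha : Tendsto (fun n => (a n : ℝ) / n) atTop (nhds A)) :
    HasRate q (fun n => c ^ a n) (logb q c * A) := by
  refine ⟨Eventually.of_forall fun n => pow_pos hc _, (ha.const_mul (logb q c)).congr fun n => ?_⟩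
  rw [logb_pow]
  ring

/-- The leading-order form of Stirling's formula: `log m! = m log m - m + o(m)`. -/
theorem tendsto_log_factorial_remainder :
    Tendsto (fun m : ℕ => (log (m.factorial : ℝ) - m * log m + m) / m) atTop (nhds 0) := by
  have hs : Tendsto (fun m : ℕ => log (Stirling.stirlingSeq m)) atTop (nhds (log √π)) :=
    Stirling.tendsto_stirlingSeq_sqrt_pi.log (by positivity)
  have hinv : Tendsto (fun m : ℕ => 1 / (m : ℝ)) atTop (nhds 0) :=
    tendsto_one_div_atTop_nhds_zero_nat
  have hlog : Tendsto (fun m : ℕ => log (m : ℝ) / m) atTop (nhds 0) :=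
    Real.isLittleO_log_id_atTop.tendsto_div_nhds_zero.comp tendsto_natCast_atTop_atTop
  have h := ((hs.add_const (1 / 2 * log 2)).mul hinv).add (hlog.const_mul (1 / 2))
  simp only [mul_zero, add_zero] at h
  refine h.congr' ?_
  filter_upwards [eventually_ge_atTop 1] with m hm
  have hm0 : (m : ℝ) ≠ 0 := by positivity
  rw [Stirling.log_stirlingSeq_formula, log_mul two_ne_zero hm0,
    log_div hm0 (exp_pos 1).ne', log_exp]
  field_simp
  ring

/-- The factorial of a sequence `a n ~ A n`, normalised by the superexponential factor
`n ^ (a n)`, has natural exponential rate `A log A - A`. -/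
theorem tendsto_log_factorial_linear_s14 {a : ℕ → ℕ} {A : ℝ} (hA : 0 < A)
    (ha : Tendsto (fun n => (a n : ℝ) / n) atTop (nhds A)) :
    Tendsto (fun n : ℕ => log ((a n).factorial : ℝ) / n - (a n : ℝ) / n * log n) atTop
      (nhds (A * log A - A)) := by
  have hprod := ha.pos_mul_atTop hA tendsto_natCast_atTop_atTop
  have hatop : Tendsto a atTop atTop := by
    rw [← tendsto_natCast_atTop_iff (R := ℝ)]
    refine hprod.congr' ?_
    filter_upwards [eventually_ge_atTop 1] with n hn
    have hn0 : (n : ℝ) ≠ 0 := by positivity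
    field_simp
  have h := ((ha.mul (ha.log hA.ne')).sub ha).add
    ((tendsto_log_factorial_remainder.comp hatop).mul ha)
  simp only [zero_mul, add_zero] at h
  refine h.congr' ?_
  filter_upwards [eventually_ge_atTop 1, hatop.eventually_ge_atTop 1] with n hn han
  have hn0 : (n : ℝ) ≠ 0 := by positivity
  have ha0 : (a n : ℝ) ≠ 0 := by positivity
  simp only [Function.comp]
  rw [log_div ha0 hn0]
  field_simp
  ring

/-- Binomial coefficients grow exponentially at the (unnormalised) entropy rate. -/
theorem HasRate.choose (q : ℝ) {a b : ℕ → ℕ} {A B : ℝ} (hB : 0 < B) (hBA : B < A)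
    (ha : Tendsto (fun n => (a n : ℝ) / n) atTop (nhds A))
    (hb : Tendsto (fun n => (b n : ℝ) / n) atTop (nhds B))
    (hab : ∀ᶠ n in atTop, b n ≤ a n) :
    HasRate q (fun n => (Nat.choose (a n) (b n) : ℝ))
      (A * logb q A - B * logb q B - (A - B) * logb q (A - B)) := by
  refine ⟨?_, ?_⟩
  · filter_upwards [hab] with n h
    exact_mod_cast Nat.choose_pos h
  have hc : Tendsto (fun n => ((a n - b n : ℕ) : ℝ) / n) atTop (nhds (A - B)) := by
    refine (ha.sub hb).congr' ?_
    filter_upwards [hab] with n h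
    rw [Nat.cast_sub h, sub_div]
  have h := (((tendsto_log_factorial_linear_s14 (hB.trans hBA) ha).sub
    (tendsto_log_factorial_linear_s14 hB hb)).sub
    (tendsto_log_factorial_linear_s14 (sub_pos.mpr hBA) hc)).div_const (log q)
  have hlim : (A * log A - A - (B * log B - B) - ((A - B) * log (A - B) - (A - B))) / log q
      = A * logb q A - B * logb q B - (A - B) * logb q (A - B) := by
    simp only [logb]
    ring
  rw [hlim] at h
  refine h.congr' ?_
  filter_upwards [hab] with n h
  have hf (m : ℕ) : (m.factorial : ℝ) ≠ 0 := by positivity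
  rw [Nat.cast_choose ℝ h, logb, log_div (hf _) (mul_ne_zero (hf _) (hf _)),
    log_mul (hf _) (hf _), Nat.cast_sub h]
  ring

/-- The asymptotic exponent `C(P,Q,L)` of the cost of one iteration of the
ball-collision algorithm over `F_q`, expressed as the maximum of three exponents. -/
theorem ball_collision_iteration_cost_exponent
    (q : ℕ) (hq : 2 ≤ q)
    (R L P Q : ℝ)
    (hP0 : 0 < P) (hPR : P < R / 2)
    (hQ0 : 0 < Q) (hQL : Q < L)
    (k1 k2 l1 l2 p1 p2 q1 q2 : ℕ → ℕ)
    (hk1 : Tendsto (fun n => (k1 n : ℝ) / n) atTop (nhds (R / 2)))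
    (hk2 : Tendsto (fun n => (k2 n : ℝ) / n) atTop (nhds (R / 2)))
    (hl1 : Tendsto (fun n => (l1 n : ℝ) / n) atTop (nhds L))
    (hl2 : Tendsto (fun n => (l2 n : ℝ) / n) atTop (nhds L))
    (hp1 : Tendsto (fun n => (p1 n : ℝ) / n) atTop (nhds P))
    (hp2 : Tendsto (fun n => (p2 n : ℝ) / n) atTop (nhds P))
    (hq1 : Tendsto (fun n => (q1 n : ℝ) / n) atTop (nhds Q))
    (hq2 : Tendsto (fun n => (q2 n : ℝ) / n) atTop (nhds Q))
    (hwd : ∀ᶠ n in atTop,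
      p1 n ≤ k1 n ∧ p2 n ≤ k2 n ∧ q1 n ≤ l1 n ∧ q2 n ≤ l2 n) :
    Tendsto (fun n : ℕ => (1 / (n : ℝ)) *
        Real.logb q
          ((Nat.choose (k1 n) (p1 n) : ℝ) * ((q : ℝ) - 1) ^ p1 n
            + (Nat.choose (k2 n) (p2 n) : ℝ) * ((q : ℝ) - 1) ^ p2 n
            + (Nat.choose (k1 n) (p1 n) : ℝ) * (Nat.choose (l1 n) (q1 n) : ℝ)
              * ((q : ℝ) - 1) ^ (p1 n + q1 n)
            + (Nat.choose (k2 n) (p2 n) : ℝ) * (Nat.choose (l2 n) (q2 n) : ℝ)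
              * ((q : ℝ) - 1) ^ (p2 n + q2 n)
            + (Nat.choose (k1 n) (p1 n) : ℝ) * (Nat.choose (k2 n) (p2 n) : ℝ)
              * (Nat.choose (l1 n) (q1 n) : ℝ) * (Nat.choose (l2 n) (q2 n) : ℝ)
              * ((q : ℝ) - 1) ^ (p1 n + p2 n + q1 n + q2 n)
              * ((q : ℝ) ^ (l1 n + l2 n))⁻¹))
      atTop
      (nhds (max
        (Real.logb q ((q : ℝ) - 1) * P + (R / 2) * Real.logb q (R / 2)
          - P * Real.logb q P - (R / 2 - P) * Real.logb q (R / 2 - P))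
        (max
          (Real.logb q ((q : ℝ) - 1) * (P + Q) + (R / 2) * Real.logb q (R / 2)
            - P * Real.logb q P - (R / 2 - P) * Real.logb q (R / 2 - P)
            + L * Real.logb q L - Q * Real.logb q Q
            - (L - Q) * Real.logb q (L - Q))
          (Real.logb q ((q : ℝ) - 1) * (2 * P + 2 * Q) - 2 * L
            + R * Real.logb q (R / 2) - 2 * P * Real.logb q P
            - (R - 2 * P) * Real.logb q (R / 2 - P)
            + 2 * L * Real.logb q L - 2 * Q * Real.logb q Q
            - (2 * L - 2 * Q) * Real.logb q (L - Q))))) := by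
  have hq2R : (2 : ℝ) ≤ q := by exact_mod_cast hq
  have hq1R : (1 : ℝ) < q := by linarith
  have hq0R : (0 : ℝ) < (q : ℝ) - 1 := by linarith
  have hlq : logb (q : ℝ) q = 1 := logb_self_eq_one hq1R
  have hadd {a b : ℕ → ℕ} {A B : ℝ} (ha : Tendsto (fun n => (a n : ℝ) / n) atTop (nhds A))
      (hb : Tendsto (fun n => (b n : ℝ) / n) atTop (nhds B)) :
      Tendsto (fun n => ((a n + b n : ℕ) : ℝ) / n) atTop (nhds (A + B)) :=
    (ha.add hb).congr fun n => by push_cast; ring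
  have ck1 := HasRate.choose q hP0 hPR hk1 hp1 (hwd.mono fun n h => h.1)
  have ck2 := HasRate.choose q hP0 hPR hk2 hp2 (hwd.mono fun n h => h.2.1)
  have cl1 := HasRate.choose q hQ0 hQL hl1 hq1 (hwd.mono fun n h => h.2.2.1)
  have cl2 := HasRate.choose q hQ0 hQL hl2 hq2 (hwd.mono fun n h => h.2.2.2)
  have t1 := ck1.mul (HasRate.pow q hq0R hp1)
  have t2 := ck2.mul (HasRate.pow q hq0R hp2)
  have t3 := (ck1.mul cl1).mul (HasRate.pow q hq0R (hadd hp1 hq1))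
  have t4 := (ck2.mul cl2).mul (HasRate.pow q hq0R (hadd hp2 hq2))
  have t5 := ((((ck1.mul ck2).mul cl1).mul cl2).mul
    (HasRate.pow q hq0R (hadd (hadd (hadd hp1 hp2) hq1) hq2))).mul
    (HasRate.pow q (by linarith : (0 : ℝ) < q) (hadd hl1 hl2)).inv
  have key := ((((t1.add hq1R t2).add hq1R t3).add hq1R t4).add hq1R t5).2
  -- Merges the equal rates of the two sides, leaving three arguments of `max`.
  rw [max_self, max_assoc (_ * _ - _ - _ + _) _ _, max_self, max_assoc, hlq] at key
  convert key using 2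
  congr 1
  · ring
  · congr 1 <;> ring
end
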